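/- arXiv:1903.07757 — 2 statements merged into one kernel-verified Lean document; each statement's English description precedes it below -/
import Mathlib

section
/- Let A, B ⊆ ℝ² be Lebesgue-measurable sets with finite positive measure, and let F_{A,B}(r) = (λ₂×λ₂){(x,y) ∈ A×B : |x−y| < r} / (λ₂(A)·λ₂(B)) be the CDF of the distance between a uniform random point of A and an independent uniform random point of B. Then for every r ≥ 0, F_{A,B}(r) = (1/(λ₂(A)·λ₂(B))) · ∫₀^r s · (∫₀^{2π} λ₂(A ∩ (B + s(cos θ, sin θ))) dθ) ds, where B + v denotes the translate {x + v : x ∈ B} of B by the vector v. -/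
open MeasureTheory Real Set
open scoped ENNReal

/-- The plane `ℝ²` with the Euclidean norm and 2-dimensional Lebesgue measure. -/
abbrev Plane : Type := EuclideanSpace ℝ (Fin 2)

/-- The measure of the overlap of `A` with the translate of `B` by `v`. -/
noncomputable def overlap (A B : Set Plane) (v : Plane) : ℝ≥0∞ :=
  volume {x : Plane | x ∈ A ∧ x - v ∈ B}

lemma overlap_eq (A B : Set Plane) (v : Plane) :
    volume (A ∩ ((fun x : Plane => x + v) '' B)) = overlap A B v := by
  unfold overlap
  congr 1
  ext x
  simp only [mem_inter_iff, mem_image, mem_ofPred_eq]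
  constructor
  · rintro ⟨hx, y, hy, rfl⟩
    exact ⟨hx, by simpa using hy⟩
  · rintro ⟨hx, hy⟩
    exact ⟨hx, x - v, hy, by simp⟩

lemma overlap_le (A B : Set Plane) (v : Plane) : overlap A B v ≤ volume A :=
  measure_mono fun _ hx => hx.1

lemma measurable_overlap {A B : Set Plane} (hA : MeasurableSet A) (hB : MeasurableSet B) :
    Measurable (overlap A B) := by
  have hm : MeasurableSet {p : Plane × Plane | p.2 ∈ A ∧ p.2 - p.1 ∈ B} :=
    (measurable_snd hA).inter ((measurable_snd.sub measurable_fst) hB)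
  exact measurable_measure_prodMk_left (ν := (volume : Measure Plane)) hm

lemma prod_eq_lintegral {A B : Set Plane} (hA : MeasurableSet A) (hB : MeasurableSet B) (r : ℝ) :
    ((volume : Measure Plane).prod (volume : Measure Plane))
        {p : Plane × Plane | p.1 ∈ A ∧ p.2 ∈ B ∧ dist p.1 p.2 < r} =
      ∫⁻ v : Plane, (Metric.ball (0 : Plane) r).indicator (overlap A B) v := by
  have hS : MeasurableSet {p : Plane × Plane | p.1 ∈ A ∧ p.2 ∈ B ∧ dist p.1 p.2 < r} :=
    (measurable_fst hA).inter ((measurable_snd hB).inter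
      (measurableSet_lt (measurable_fst.dist measurable_snd) measurable_const))
  have hT : MeasurableSet {p : Plane × Plane | p.1 ∈ A ∧ p.1 - p.2 ∈ B ∧ ‖p.2‖ < r} :=
    (measurable_fst hA).inter (((measurable_fst.sub measurable_snd) hB).inter
      (measurableSet_lt measurable_snd.norm measurable_const))
  have h1 : ((volume : Measure Plane).prod (volume : Measure Plane))
        {p : Plane × Plane | p.1 ∈ A ∧ p.2 ∈ B ∧ dist p.1 p.2 < r} =
      ((volume : Measure Plane).prod (volume : Measure Plane))
        {p : Plane × Plane | p.1 ∈ A ∧ p.1 - p.2 ∈ B ∧ ‖p.2‖ < r} := by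
    rw [Measure.prod_apply hS, Measure.prod_apply hT]
    refine lintegral_congr fun x => ?_
    rw [← (Measure.measurePreserving_sub_left (volume : Measure Plane) x).measure_preimage
      (measurable_prodMk_left hS).nullMeasurableSet]
    congr 1
    ext v
    simp [dist_eq_norm]
  rw [h1, Measure.prod_apply_symm hT]
  refine lintegral_congr fun v => ?_
  by_cases hv : ‖v‖ < r
  · rw [indicator_of_mem (by simpa using hv)]
    unfold overlap
    congr 1
    ext x
    simp [hv]
  · rw [indicator_of_notMem (by simpa using hv)]
    simp [hv]

lemma lintegral_plane {f : Plane → ℝ≥0∞} (hf : Measurable f) :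
    ∫⁻ v : Plane, f v = ∫⁻ p : ℝ × ℝ, f !₂[p.1, p.2] := by
  rw [← (PiLp.volume_preserving_toLp (Fin 2)).lintegral_comp hf,
    ← ((volume_preserving_finTwoArrow ℝ).symm _).lintegral_comp
      (f := fun a => f (WithLp.toLp 2 a))
      (hf.comp (PiLp.volume_preserving_toLp (Fin 2)).measurable)]
  rfl

lemma measurable_polar :
    Measurable (fun p : ℝ × ℝ => (!₂[p.1 * Real.cos p.2, p.1 * Real.sin p.2] : Plane)) := by
  apply Continuous.measurable
  fun_prop

lemma norm_polar {s : ℝ} (hs : 0 < s) (θ : ℝ) :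
    ‖(!₂[s * Real.cos θ, s * Real.sin θ] : Plane)‖ = s := by
  rw [EuclideanSpace.norm_eq]
  simp only [Fin.sum_univ_two, Real.norm_eq_abs, sq_abs]
  have : (s * Real.cos θ) ^ 2 + (s * Real.sin θ) ^ 2 = s ^ 2 := by
    nlinarith [Real.sin_sq_add_cos_sq θ]
  simpa [this] using Real.sqrt_sq hs.le

lemma lintegral_ball_polar {g : Plane → ℝ≥0∞} (hg : Measurable g) (r : ℝ) :
    ∫⁻ v : Plane, (Metric.ball (0 : Plane) r).indicator g v =
      ∫⁻ s in Ioo 0 r, ENNReal.ofReal s *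
        ∫⁻ θ in Ioo (-π) π, g !₂[s * Real.cos θ, s * Real.sin θ] := by
  have hi : Measurable ((Metric.ball (0 : Plane) r).indicator g) :=
    hg.indicator Metric.isOpen_ball.measurableSet
  rw [lintegral_plane hi, ← lintegral_comp_polarCoord_symm]
  simp only [polarCoord_symm_apply, polarCoord_target, smul_eq_mul]
  rw [Measure.volume_eq_prod, ← Measure.prod_restrict, lintegral_prod]
  swap
  · exact ((ENNReal.measurable_ofReal.comp measurable_fst).mul
      (hi.comp measurable_polar)).aemeasurable
  have h2 : ∀ s ∈ Ioi (0:ℝ), (∫⁻ θ in Ioo (-π) π, ENNReal.ofReal s *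
        (Metric.ball (0 : Plane) r).indicator g !₂[s * Real.cos θ, s * Real.sin θ]) =
      (Iio r).indicator (fun s => ENNReal.ofReal s *
        ∫⁻ θ in Ioo (-π) π, g !₂[s * Real.cos θ, s * Real.sin θ]) s := by
    intro s hs
    rw [lintegral_const_mul (f := fun θ : ℝ => (Metric.ball (0 : Plane) r).indicator g
      !₂[s * Real.cos θ, s * Real.sin θ]) _ (hi.comp (measurable_polar.comp measurable_prodMk_left))]
    by_cases h : s < r
    · rw [indicator_of_mem (by simpa using h)]
      congr 1
      refine lintegral_congr fun θ => ?_
      rw [indicator_of_mem]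
      rw [mem_ball_zero_iff, norm_polar hs]
      exact h
    · rw [indicator_of_notMem (by simpa using h)]
      have : ∀ θ : ℝ, (Metric.ball (0 : Plane) r).indicator g
          !₂[s * Real.cos θ, s * Real.sin θ] = 0 := by
        intro θ
        rw [indicator_of_notMem]
        rw [mem_ball_zero_iff, norm_polar hs]
        exact h
      simp [this]
  rw [setLIntegral_congr_fun measurableSet_Ioi h2, lintegral_indicator measurableSet_Iio,
    Measure.restrict_restrict measurableSet_Iio, inter_comm, Ioi_inter_Iio]

lemma inner_eq {g : Plane → ℝ≥0∞} (hg : Measurable g) {c : ℝ≥0∞} (hc : c < ⊤)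
    (hgc : ∀ v, g v ≤ c) (s : ℝ) :
    ∫ θ in (0:ℝ)..(2 * π), (g !₂[s * Real.cos θ, s * Real.sin θ]).toReal =
      (∫⁻ θ in Ioo (-π) π, g !₂[s * Real.cos θ, s * Real.sin θ]).toReal := by
  have hp : Function.Periodic
      (fun θ : ℝ => (g !₂[s * Real.cos θ, s * Real.sin θ]).toReal) (2 * π) := by
    intro θ
    simp
  have h := hp.intervalIntegral_add_eq 0 (-π)
  rw [zero_add, show -π + 2 * π = π by ring] at h
  rw [h, intervalIntegral.integral_of_le (by linarith [Real.pi_pos]),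
    integral_Ioc_eq_integral_Ioo, integral_toReal]
  · exact (hg.comp (measurable_polar.comp measurable_prodMk_left)).aemeasurable
  · exact Filter.Eventually.of_forall fun θ => (hgc _).trans_lt hc

lemma outer_eq {g : Plane → ℝ≥0∞} (hg : Measurable g) {c : ℝ≥0∞} (hc : c < ⊤)
    (hgc : ∀ v, g v ≤ c) {r : ℝ} (hr : 0 ≤ r) :
    ∫ s in (0:ℝ)..r, s *
        ∫ θ in (0:ℝ)..(2 * π), (g !₂[s * Real.cos θ, s * Real.sin θ]).toReal =
      (∫⁻ v : Plane, (Metric.ball (0 : Plane) r).indicator g v).toReal := by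
  rw [lintegral_ball_polar hg, ← integral_toReal, intervalIntegral.integral_of_le hr,
    integral_Ioc_eq_integral_Ioo]
  · refine setIntegral_congr_fun measurableSet_Ioo fun s hs => ?_
    simp only [inner_eq hg hc hgc, ENNReal.toReal_mul, ENNReal.toReal_ofReal hs.1.le]
  · refine (ENNReal.measurable_ofReal.mul ?_).aemeasurable
    exact Measurable.lintegral_prod_right' (hg.comp measurable_polar)
  · refine Filter.Eventually.of_forall fun s => ENNReal.mul_lt_top ENNReal.ofReal_lt_top ?_
    refine (lintegral_mono fun θ => hgc _).trans_lt ?_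
    rw [lintegral_const]
    exact ENNReal.mul_lt_top hc (by simp)

/-- **Integral (CDF) form of the distance-distribution theorem.**
If `A, B ⊆ ℝ²` are measurable with finite positive Lebesgue measure and
`F` is the CDF of the distance between independent uniform points of `A` and `B`, then for
every `r ≥ 0`,
`F r = (1/(λ₂(A)·λ₂(B))) ∫₀^r s (∫₀^{2π} λ₂(A ∩ (B + s(cos θ, sin θ))) dθ) ds`. -/
theorem distance_cdf_polar_integral_form
    (A B : Set Plane) (hAm : MeasurableSet A) (hBm : MeasurableSet B)
    (hA0 : 0 < volume A) (hAfin : volume A < ⊤)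
    (hB0 : 0 < volume B) (hBfin : volume B < ⊤)
    (F : ℝ → ℝ)
    (hF : ∀ r : ℝ, F r =
      (((volume : Measure Plane).prod (volume : Measure Plane))
        {p : Plane × Plane | p.1 ∈ A ∧ p.2 ∈ B ∧ dist p.1 p.2 < r}).toReal /
      ((volume A).toReal * (volume B).toReal))
    (r : ℝ) (hr : 0 ≤ r) :
    F r = (1 / ((volume A).toReal * (volume B).toReal)) *
      ∫ s in (0:ℝ)..r, s *
        ∫ θ in (0:ℝ)..(2 * π),
          (volume (A ∩ ((fun x : Plane => x + (show Plane from !₂[s * Real.cos θ, s * Real.sin θ])) '' B))).toReal := by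
  have h := outer_eq (measurable_overlap hAm hBm) hAfin (overlap_le A B) hr
  rw [hF, prod_eq_lintegral hAm hBm, ← h, div_eq_inv_mul, one_div]
  simp only [← overlap_eq]
end

section
/- Let R > 0 and let D ⊆ ℝ² be the disk of radius R centered at the origin. Let F(r) = (λ₂×λ₂){(x,y) ∈ D×D : |x−y| < r} / (π²R⁴) be the CDF of the distance between two independent uniform random points in D. Then for every r with 0 < r < 2R, F is differentiable at r with derivative f(r) = (2r/(πR⁴)) · (2R²·arccos(r/(2R)) − (r/2)·√(4R² − r²)). -/
open MeasureTheory Real Set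
open scoped ENNReal

lemma slice_vol (R s y : ℝ) (hs : 0 ≤ s) :
    volume {x : ℝ | x ^ 2 + y ^ 2 ≤ R ^ 2 ∧ (x - s) ^ 2 + y ^ 2 ≤ R ^ 2}
      = ENNReal.ofReal (2 * √(R ^ 2 - y ^ 2) - s) := by
  by_cases h : y ^ 2 ≤ R ^ 2
  · have hw := Real.sq_sqrt (sub_nonneg.2 h)
    have hw0 := Real.sqrt_nonneg (R ^ 2 - y ^ 2)
    set w := √(R ^ 2 - y ^ 2)
    have : {x : ℝ | x ^ 2 + y ^ 2 ≤ R ^ 2 ∧ (x - s) ^ 2 + y ^ 2 ≤ R ^ 2} = Icc (s - w) w := by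
      ext x
      simp only [mem_ofPred_eq, mem_Icc]
      constructor
      · rintro ⟨h1, h2⟩
        have h1' := abs_le_of_sq_le_sq' (a := x) (b := w) (by linarith) hw0
        have h2' := abs_le_of_sq_le_sq' (a := x - s) (b := w) (by linarith) hw0
        constructor <;> linarith [h1'.2, h2'.1]
      · rintro ⟨h1, h2⟩
        have h1' : x ^ 2 ≤ w ^ 2 := sq_le_sq' (by linarith) h2
        have h2' : (x - s) ^ 2 ≤ w ^ 2 := sq_le_sq' (by linarith) (by linarith)
        constructor <;> linarith
    rw [this, Real.volume_Icc]
    congr 1; ring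
  · have : {x : ℝ | x ^ 2 + y ^ 2 ≤ R ^ 2 ∧ (x - s) ^ 2 + y ^ 2 ≤ R ^ 2} = ∅ := by
      ext x
      simp only [mem_ofPred_eq, mem_empty_iff_false, iff_false]
      rintro ⟨h1, -⟩
      nlinarith [sq_nonneg x]
    rw [this, measure_empty, Real.sqrt_eq_zero_of_nonpos (by linarith), eq_comm,
      ENNReal.ofReal_eq_zero]
    linarith

lemma lens_int (R s : ℝ) (hR : 0 < R) (hs : 0 ≤ s) (hs2 : s < 2 * R) :
    ∫ y, max (2 * √(R ^ 2 - y ^ 2) - s) 0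
      = 2 * R ^ 2 * Real.arccos (s / (2 * R)) - (s / 2) * √(4 * R ^ 2 - s ^ 2) := by
  have hh2 : 0 < R ^ 2 - s ^ 2 / 4 := by nlinarith
  obtain ⟨h, hh⟩ : ∃ h, h = √(R ^ 2 - s ^ 2 / 4) := ⟨_, rfl⟩
  have hsq : h ^ 2 = R ^ 2 - s ^ 2 / 4 := by rw [hh, Real.sq_sqrt hh2.le]
  have h0 : 0 < h := by rw [hh]; exact Real.sqrt_pos.2 hh2
  have hhR : h ≤ R := abs_le_of_sq_le_sq (by nlinarith) hR.le |>.trans' (le_abs_self _)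
  have hRh : √(R ^ 2 - h ^ 2) = s / 2 := by
    rw [hsq, Real.sqrt_eq_iff_mul_self_eq] <;> nlinarith
  have e1 : √(4 * R ^ 2 - s ^ 2) = 2 * h := by
    rw [Real.sqrt_eq_iff_mul_self_eq] <;> nlinarith
  have e2 : Real.arccos (s / (2 * R)) = Real.arcsin (h / R) := by
    rw [Real.arccos_eq_arcsin (by positivity)]
    congr 1
    rw [Real.sqrt_eq_iff_mul_self_eq]
    · field_simp; linarith
    · have : 1 - (s / (2 * R)) ^ 2 = (h / R) ^ 2 := by field_simp; linarith
      rw [this]; positivity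
    · positivity
  rw [e1, e2, ← setIntegral_eq_integral_of_forall_compl_eq_zero (s := Ioc (-h) h),
    ← intervalIntegral.integral_of_le (by linarith)]
  · have key : ∀ y ∈ Icc (-h) h, s / 2 ≤ √(R ^ 2 - y ^ 2) := by
      intro y hy
      rw [← hRh]
      apply Real.sqrt_le_sqrt
      have := sq_le_sq' hy.1 hy.2
      linarith
    rw [intervalIntegral.integral_congr (g := fun y => 2 * √(R ^ 2 - y ^ 2) - s),
      intervalIntegral.integral_eq_sub_of_hasDerivAt_of_le
        (f := fun y => y * √(R ^ 2 - y ^ 2) + R ^ 2 * Real.arcsin (y / R) - s * y) (by linarith)]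
    · simp only [neg_sq, hRh, neg_div, Real.arcsin_neg]
      ring
    · apply Continuous.continuousOn
      have := Real.continuous_arcsin
      fun_prop
    · intro y hy
      have hy2 : y ^ 2 < R ^ 2 := by
        apply sq_lt_sq'
        · linarith [hy.1]
        · linarith [hy.2]
      have hp : 0 < R ^ 2 - y ^ 2 := by linarith
      have hne : √(R ^ 2 - y ^ 2) ≠ 0 := (Real.sqrt_pos.2 hp).ne'
      have d1 : HasDerivAt (fun y => R ^ 2 - y ^ 2) (-(2 * y)) y := by
        simpa using (hasDerivAt_pow 2 y).const_sub (R ^ 2)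
      have d2 := d1.sqrt hp.ne'
      have d3 : HasDerivAt (fun y => y / R) (1 / R) y := (hasDerivAt_id y).div_const R
      have d4 := (Real.hasDerivAt_arcsin (x := y / R)
        (by rw [ne_eq, div_eq_iff hR.ne']; linarith [hy.1])
        (by rw [ne_eq, div_eq_iff hR.ne']; linarith [hy.2])).comp y d3
      have e3 : √(1 - (y / R) ^ 2) = √(R ^ 2 - y ^ 2) / R := by
        rw [← Real.sqrt_sq hR.le, ← Real.sqrt_div' _ (by positivity), Real.sqrt_sq hR.le]
        congr 1; field_simp
      rw [e3] at d4
      convert! (((hasDerivAt_id y).mul d2).add (d4.const_mul (R ^ 2))).sub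
        ((hasDerivAt_id y).const_mul s) using 1
      simp only [id]
      have := Real.sq_sqrt hp.le
      field_simp
      linear_combination this
    · apply Continuous.intervalIntegrable
      fun_prop
    · intro y hy
      rw [uIcc_of_le (by linarith)] at hy
      exact max_eq_left (by linarith [key y hy])
  · intro y hy
    apply max_eq_right
    have : h ^ 2 ≤ y ^ 2 := by
      rw [mem_Ioc, not_and_or, not_lt, not_le] at hy
      rcases hy with hy | hy <;> nlinarith
    have : √(R ^ 2 - y ^ 2) ≤ √(R ^ 2 - h ^ 2) := Real.sqrt_le_sqrt (by linarith)
    linarith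

lemma lens_area (R : ℝ) (hR : 0 < R) (z : Plane) (hz : ‖z‖ < 2 * R) :
    (volume {x : Plane | ‖x‖ ≤ R ∧ ‖x + z‖ ≤ R}).toReal
      = 2 * R ^ 2 * Real.arccos (‖z‖ / (2 * R)) - (‖z‖ / 2) * √(4 * R ^ 2 - ‖z‖ ^ 2) := by
  obtain ⟨s, hs⟩ : ∃ s, s = ‖z‖ := ⟨_, rfl⟩
  have hs0 : 0 ≤ s := hs ▸ norm_nonneg z
  rw [← hs] at hz ⊢
  obtain ⟨w, hw⟩ : ∃ w : Plane, w = !₂[-s, 0] := ⟨_, rfl⟩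
  have hzw : ‖w‖ = ‖z‖ := by
    rw [← hs, hw, EuclideanSpace.norm_eq]
    simp [Real.sqrt_sq hs0]
  have hrot := Submodule.reflection_sub hzw
  set ρ : Plane ≃ₗᵢ[ℝ] Plane := Submodule.reflection (Submodule.span ℝ {w - z})ᗮ
  have hmeas : MeasurableSet {x : Plane | ‖x‖ ≤ R ∧ ‖x + z‖ ≤ R} :=
    by
    rw [Set.ofPred_and]
    apply MeasurableSet.inter
    · apply measurableSet_le <;> fun_prop
    · apply measurableSet_le <;> fun_prop
  rw [← ρ.measurePreserving.measure_preimage hmeas.nullMeasurableSet]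
  have hset : ρ ⁻¹' {x : Plane | ‖x‖ ≤ R ∧ ‖x + z‖ ≤ R}
      = (fun x : Plane => MeasurableEquiv.finTwoArrow (WithLp.ofLp x)) ⁻¹'
        {p : ℝ × ℝ | p.1 ^ 2 + p.2 ^ 2 ≤ R ^ 2 ∧ (p.1 - s) ^ 2 + p.2 ^ 2 ≤ R ^ 2} := by
    ext x
    simp only [mem_preimage, mem_ofPred_eq]
    rw [← hrot, ← map_add, ρ.norm_map, ρ.norm_map, EuclideanSpace.norm_eq, EuclideanSpace.norm_eq,
      Real.sqrt_le_left hR.le, Real.sqrt_le_left hR.le, hw]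
    simp [MeasurableEquiv.finTwoArrow, ← sub_eq_add_neg]
  have hmeas2 : MeasurableSet
      {p : ℝ × ℝ | p.1 ^ 2 + p.2 ^ 2 ≤ R ^ 2 ∧ (p.1 - s) ^ 2 + p.2 ^ 2 ≤ R ^ 2} :=
    by
    rw [Set.ofPred_and]
    apply MeasurableSet.inter
    · apply measurableSet_le <;> fun_prop
    · apply measurableSet_le <;> fun_prop
  have hmp : MeasurePreserving
      (fun x : Plane => MeasurableEquiv.finTwoArrow (WithLp.ofLp x)) volume volume :=
    (volume_preserving_finTwoArrow ℝ).comp (PiLp.volume_preserving_ofLp (Fin 2))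
  rw [hset, hmp.measure_preimage hmeas2.nullMeasurableSet, Measure.volume_eq_prod,
    Measure.prod_apply_symm hmeas2, ← lens_int R s hR hs0 hz]
  have : ∀ y : ℝ, volume ((fun x => (x, y)) ⁻¹'
      {p : ℝ × ℝ | p.1 ^ 2 + p.2 ^ 2 ≤ R ^ 2 ∧ (p.1 - s) ^ 2 + p.2 ^ 2 ≤ R ^ 2})
      = ENNReal.ofReal (2 * √(R ^ 2 - y ^ 2) - s) := fun y => slice_vol R s y hs0
  simp_rw [this]
  rw [← integral_toReal (by fun_prop) (by simp)]
  simp_rw [ENNReal.toReal_ofReal']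

lemma cdf_eq (R : ℝ) (hR : 0 < R) (r : ℝ) (hr : 0 < r) (hr2 : r < 2 * R) :
    (((volume : Measure Plane).prod (volume : Measure Plane))
        {p : Plane × Plane | p.1 ∈ Metric.closedBall (0 : Plane) R ∧
          p.2 ∈ Metric.closedBall (0 : Plane) R ∧ dist p.1 p.2 < r}).toReal
      = 2 * π * ∫ s in (0:ℝ)..r, s * 
        (2 * R ^ 2 * Real.arccos (s / (2 * R)) - (s / 2) * √(4 * R ^ 2 - s ^ 2)) := by
  have hm : MeasurableSet {p : Plane × Plane | p.1 ∈ Metric.closedBall (0 : Plane) R ∧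
          p.2 ∈ Metric.closedBall (0 : Plane) R ∧ dist p.1 p.2 < r} := by
    simp only [mem_closedBall_zero_iff]
    rw [Set.ofPred_and, Set.ofPred_and]
    apply MeasurableSet.inter
    · apply measurableSet_le <;> fun_prop
    · apply MeasurableSet.inter
      · apply measurableSet_le <;> fun_prop
      · apply measurableSet_lt <;> fun_prop
  have hmp := measurePreserving_prod_add (volume : Measure Plane) (volume : Measure Plane)
  have hm' := hmp.measurable hm
  rw [← hmp.measure_preimage hm.nullMeasurableSet, Measure.prod_apply_symm hm',
    ← integral_toReal (measurable_measure_prodMk_right hm').aemeasurable]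
  · let L : ℝ → ℝ := (Iio r).indicator fun s =>
      (2 * R ^ 2 * Real.arccos (s / (2 * R)) - (s / 2) * √(4 * R ^ 2 - s ^ 2))
    rw [integral_congr_ae (g := fun z => L ‖z‖), integral_fun_norm_addHaar]
    · have hv : (volume : Measure Plane).real (Metric.ball 0 1) = π := by
        rw [Measure.real, EuclideanSpace.volume_ball_fin_two]
        simp [ENNReal.toReal_ofReal, Real.pi_pos.le]
      rw [hv]
      simp only [finrank_euclideanSpace, Fintype.card_fin, smul_eq_mul, nsmul_eq_mul]
      rw [intervalIntegral.integral_of_le hr.le, integral_Ioc_eq_integral_Ioo]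
      have : ∀ y : ℝ, y ^ (2 - 1) * L y = (Iio r).indicator (fun s => s * (2 * R ^ 2 * Real.arccos (s / (2 * R)) - (s / 2) * √(4 * R ^ 2 - s ^ 2))) y := by
        intro y
        simp only [L, indicator]
        split_ifs <;> simp
      simp_rw [this]
      rw [setIntegral_indicator measurableSet_Iio, Ioi_inter_Iio]
      push_cast
      ring
    · filter_upwards with z
      simp only [L, indicator, mem_Iio]
      split_ifs with hz
      · rw [← lens_area R hR z (hz.trans hr2)]
        congr 2
        ext x
        simp [hz]
      · rw [← ENNReal.toReal_zero, ← measure_empty (μ := (volume : Measure Plane))]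
        congr 2
        ext x
        simp [hz]
  · filter_upwards with z
    refine (measure_mono (t := Metric.closedBall (0 : Plane) R) ?_).trans_lt
      measure_closedBall_lt_top
    intro x hx
    exact hx.1

theorem distance_pdf_coincident_disks
    (R : ℝ) (hR : 0 < R)
    (D : Set Plane) (hD : D = Metric.closedBall (0 : Plane) R)
    (F : ℝ → ℝ)
    (hF : ∀ r : ℝ, F r =
      (((volume : Measure Plane).prod (volume : Measure Plane))
        {p : Plane × Plane | p.1 ∈ D ∧ p.2 ∈ D ∧ dist p.1 p.2 < r}).toReal /
      (π ^ 2 * R ^ 4))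
    (r : ℝ) (hr0 : 0 < r) (hr2R : r < 2 * R) :
    HasDerivAt F
      ((2 * r / (π * R ^ 4)) *
        (2 * R ^ 2 * Real.arccos (r / (2 * R)) - (r / 2) * Real.sqrt (4 * R ^ 2 - r ^ 2))) r := by
  subst hD
  have hc : Continuous fun s : ℝ => s *
        (2 * R ^ 2 * Real.arccos (s / (2 * R)) - (s / 2) * √(4 * R ^ 2 - s ^ 2)) := by
    have := Real.continuous_arccos
    fun_prop
  have hd := ((hc.integral_hasStrictDerivAt 0 r).hasDerivAt.const_mul (2 * π)).div_const
    (π ^ 2 * R ^ 4)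
  have hd2 := hd.congr_of_eventuallyEq (f₁ := F) (by
    filter_upwards [Ioo_mem_nhds hr0 hr2R] with u hu
    rw [hF u, cdf_eq R hR u hu.1 hu.2])
  convert! hd2 using 1
  have := Real.pi_pos.ne'
  field_simp
end
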